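/- Assume the unitarity condition: R(u) · P R(−u) P = γ(u) · Id_{V⊗V} for all u ∈ ℂ, where γ : ℂ → ℂ. Let n, n' ≥ 2, c ∈ ℂ^n, c' ∈ ℂ^{n'}, and k ∈ {1,…,n−1} with γ(c_k−c_{k+1}) ≠ 0; set A_k := P_{k,k+1} R_{k+1,k}(c_{k+1}−c_k) ∈ End(V^{⊗n}) and let c^{(s_k)} be obtained from c by exchanging c_k and c_{k+1}. Then the operator A_k ⊗ Id_{V^{⊗n'}} maps W_c ⊗ W_{c'} bijectively onto W_{c^{(s_k)}} ⊗ W_{c'}, and for every u ∈ ℂ it intertwines the restricted fused operators: (A_k ⊗ Id) ∘ (R_{c,c'}(u)|_{W_c ⊗ W_{c'}}) = (R_{c^{(s_k)},c'}(u)|_{W_{c^{(s_k)}} ⊗ W_{c'}}) ∘ (A_k ⊗ Id) as maps W_c ⊗ W_{c'} → W_{c^{(s_k)}} ⊗ W_{c'}. In particular, the two restricted fused operators have identical matrices in the bases {F(c)e_i} ⊗ B' and {A_k F(c)e_i} ⊗ B' respectively, for any e_1,…,e_l with {F(c)e_i} a basis of W_c and any basis B' of W_{c'}. -/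

import Mathlib

/-!
We model the finite-dimensional complex vector space `V` as `ℂ^N` (i.e. `Fin N → ℂ`),
so that `V^{⊗ n}` is `(Fin n → Fin N) → ℂ` and endomorphisms of `V^{⊗ n}` are matrices
indexed by multi-indices `Fin n → Fin N`.
-/

open scoped BigOperators

noncomputable section

/-- Endomorphisms of `V ⊗ V` for `V = ℂ^N`. -/
abbrev End2 (N : ℕ) := Matrix (Fin N × Fin N) (Fin N × Fin N) ℂ

/-- Endomorphisms of `V^{⊗ n}` for `V = ℂ^N`. -/
abbrev EndT (N n : ℕ) := Matrix (Fin n → Fin N) (Fin n → Fin N) ℂ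

/-- `X_{a,b}` : the endomorphism `X` of `V ⊗ V` applied to the tensor factors `a` and `b`
(in that order) of `V^{⊗ n}`, and the identity on all other factors. -/
def op2 (N n : ℕ) (X : End2 N) (a b : Fin n) : EndT N n :=
  fun f g => X (f a, f b) (g a, g b) *
    ∏ i : Fin n, if i ≠ a ∧ i ≠ b then (if f i = g i then (1 : ℂ) else 0) else 1

/-- The flip (permutation) operator `P : x ⊗ y ↦ y ⊗ x` on `V ⊗ V`. -/
def flipMat (N : ℕ) : End2 N := fun p q => if p.1 = q.2 ∧ p.2 = q.1 then 1 else 0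

/-- `R` is a solution of the Yang--Baxter equation (with additive spectral parameters)
on `V ⊗ V ⊗ V`:  `R₁₂(u) R₁₃(u+v) R₂₃(v) = R₂₃(v) R₁₃(u+v) R₁₂(u)`. -/
def YangBaxter (N : ℕ) (R : ℂ → End2 N) : Prop :=
  ∀ u v : ℂ,
    op2 N 3 (R u) 0 1 * op2 N 3 (R (u + v)) 0 2 * op2 N 3 (R v) 1 2 =
    op2 N 3 (R v) 1 2 * op2 N 3 (R (u + v)) 0 2 * op2 N 3 (R u) 0 1

/-- The fused operator `R_{c,c'}(u)`, acting on `V^{⊗ m}`, where the `n` factors of the first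
block are embedded via `a` and the `n'` factors of the second block via `b`:
`R_{c,c'}(u) = ∏→_{i=1..n'} [ R_{n,i'}(u+c_n−c'_i) ⋯ R_{2,i'}(u+c_2−c'_i) R_{1,i'}(u+c_1−c'_i) ]`. -/
def fusedOp (N : ℕ) (R : ℂ → End2 N) {m n n' : ℕ} (a : Fin n → Fin m) (b : Fin n' → Fin m)
    (c : Fin n → ℂ) (c' : Fin n' → ℂ) (u : ℂ) : EndT N m :=
  ((List.finRange n').map fun i =>
    (((List.finRange n).reverse).map fun k =>
      op2 N m (R (u + c k - c' i)) (a k) (b i)).prod).prod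

/-- The list of pairs `(i,j)` with `i < j`, in lexicographic order. -/
def lexPairs (n : ℕ) : List (Fin n × Fin n) :=
  (List.finRange n).flatMap fun i =>
    ((List.finRange n).filter fun j => decide (i < j)).map fun j => (i, j)

/-- The operator `F(c) = ∏→_{1 ≤ i < j ≤ n} R_{i,j}(c_i − c_j)` on `V^{⊗ n}`
(product over the pairs `i < j` in lexicographic order). -/
def Fop (N : ℕ) (R : ℂ → End2 N) {n : ℕ} (c : Fin n → ℂ) : EndT N n :=
  ((lexPairs n).map fun p => op2 N n (R (c p.1 - c p.2)) p.1 p.2).prod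

/-- The endomorphism of `V^{⊗ n}` embedded into `V^{⊗ m}`, acting on the factors listed
by `e` and identically on all other factors. -/
def opBlock (N : ℕ) {m n : ℕ} (e : Fin n → Fin m) (X : EndT N n) : EndT N m :=
  fun f g => X (f ∘ e) (g ∘ e) *
    ∏ i : Fin m, if ∀ k, e k ≠ i then (if f i = g i then (1 : ℂ) else 0) else 1

/-- The operator `P_π` on `V^{⊗ n}` permuting the tensor factors:
`P_π (x_1 ⊗ ⋯ ⊗ x_n) = x_{π(1)} ⊗ ⋯ ⊗ x_{π(n)}`. -/
def permMat (N n : ℕ) (π : Equiv.Perm (Fin n)) : EndT N n :=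
  fun f g => if f = g ∘ π then 1 else 0

/-- The tensor product of a vector of `V^{⊗ n}` and a vector of `V^{⊗ n'}`,
as a vector of `V^{⊗ (n+n')}`. -/
def tensVec (N : ℕ) {n n' : ℕ} (x : (Fin n → Fin N) → ℂ) (y : (Fin n' → Fin N) → ℂ) :
    (Fin (n + n') → Fin N) → ℂ :=
  fun f => x (fun i => f (Fin.castAdd n' i)) * y (fun j => f (Fin.natAdd n j))

end

section YangBaxterFamilies

variable {ι M : Type*} [Monoid M]

/-- A family `r i j` in a monoid satisfying the Yang–Baxter relation on triples of distinct
labels, in which members with disjoint labels commute. -/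
structure IsYBFamily (r : ι → ι → M) : Prop where
  yang_baxter : ∀ i j k, i ≠ j → i ≠ k → j ≠ k →
    r i j * r i k * r j k = r j k * r i k * r i j
  commute : ∀ i j k l, i ≠ k → i ≠ l → j ≠ k → j ≠ l → Commute (r i j) (r k l)

/-- The product of `r i j` over the pairs with `i` before `j` in the list, in lexicographic
order. -/
def pairProd (r : ι → ι → M) : List ι → M
  | [] => 1
  | a :: L => (L.map (r a)).prod * pairProd r L

theorem commute_map_prod {κ : Type*} {x : M} {f : κ → M} {L : List κ}
    (h : ∀ i ∈ L, Commute x (f i)) : Commute x (L.map f).prod := by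
  apply Commute.list_prod_right
  simpa using h

theorem commute_pairProd {r : ι → ι → M} {x : M} {L : List ι} (hL : L.Nodup)
    (h : ∀ i ∈ L, ∀ j ∈ L, i ≠ j → Commute x (r i j)) : Commute x (pairProd r L) := by
  induction L with
  | nil => exact Commute.one_right x
  | cons a L ih =>
    rw [List.nodup_cons] at hL
    refine Commute.mul_right (commute_map_prod fun i hi => h a (by simp) i (by simp [hi]) ?_)
      (ih hL.2 fun i hi j hj => h i (by simp [hi]) j (by simp [hj]))
    rintro rfl
    exact hL.1 hi

theorem prod_mul_prod_row {r : ι → ι → M} {t : ι → M} {a : ι} {L : List ι}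
    (hL : (a :: L).Nodup)
    (ht : ∀ i ∈ L, t a * t i * r a i = r a i * t i * t a)
    (hc : ∀ i ∈ L, ∀ j ∈ L, i ≠ j → Commute (t i) (r a j)) :
    t a * (L.map t).prod * (L.map (r a)).prod =
      (L.map (r a)).prod * (L.map t).prod * t a := by
  induction L with
  | nil => simp
  | cons l L ih =>
    simp only [List.nodup_cons, List.mem_cons, not_or] at hL
    have ih' := ih (by simp [hL]) (fun i hi => ht i (by simp [hi]))
      (fun i hi j hj => hc i (by simp [hi]) j (by simp [hj]))
    have h1 : Commute (r a l) (L.map t).prod := commute_map_prod fun i hi =>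
      (hc i (by simp [hi]) l (by simp) (by rintro rfl; exact hL.2.1 hi)).symm
    have h2 : Commute (t l) (L.map (r a)).prod := commute_map_prod fun i hi =>
      hc l (by simp) i (by simp [hi]) (by rintro rfl; exact hL.2.1 hi)
    simp only [List.map_cons, List.prod_cons]
    calc t a * (t l * (L.map t).prod) * (r a l * (L.map (r a)).prod)
        = t a * t l * ((L.map t).prod * r a l) * (L.map (r a)).prod := by simp only [mul_assoc]
      _ = (t a * t l * r a l) * (L.map t).prod * (L.map (r a)).prod := by
          rw [← h1.eq]; simp only [mul_assoc]
      _ = r a l * t l * (t a * (L.map t).prod * (L.map (r a)).prod) := by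
          rw [ht l (by simp)]; simp only [mul_assoc]
      _ = r a l * (t l * (L.map (r a)).prod) * (L.map t).prod * t a := by
          rw [ih']; simp only [mul_assoc]
      _ = _ := by rw [h2.eq]; simp only [mul_assoc]

theorem prod_mul_pairProd {r : ι → ι → M} {t : ι → M} {L : List ι} (hL : L.Nodup)
    (ht : ∀ i ∈ L, ∀ j ∈ L, i ≠ j → t i * t j * r i j = r i j * t j * t i)
    (hc : ∀ i ∈ L, ∀ j ∈ L, ∀ k ∈ L, i ≠ j → i ≠ k → Commute (t i) (r j k)) :
    (L.map t).prod * pairProd r L = pairProd r L * (L.reverse.map t).prod := by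
  induction L with
  | nil => simp
  | cons a L ih =>
    have hL' := List.nodup_cons.mp hL
    have hne : ∀ i ∈ L, a ≠ i := by rintro i hi rfl; exact hL'.1 hi
    have h1 := prod_mul_prod_row (r := r) (t := t) hL
      (fun i hi => ht a (by simp) i (by simp [hi]) (hne i hi))
      (fun i hi j hj hij => hc i (by simp [hi]) a (by simp) j (by simp [hj]) (hne i hi).symm hij)
    have h2 : Commute (t a) (pairProd r L) := commute_pairProd hL'.2 fun i hi j hj _ =>
      hc a (by simp) i (by simp [hi]) j (by simp [hj]) (hne i hi) (hne j hj)
    have h3 := ih hL'.2 (fun i hi j hj => ht i (by simp [hi]) j (by simp [hj]))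
      (fun i hi j hj k hk => hc i (by simp [hi]) j (by simp [hj]) k (by simp [hk]))
    simp only [List.map_cons, List.prod_cons, pairProd, List.reverse_cons, List.map_append,
      List.prod_append, List.map_nil, List.prod_nil, mul_one]
    calc t a * (L.map t).prod * ((L.map (r a)).prod * pairProd r L)
        = (t a * (L.map t).prod * (L.map (r a)).prod) * pairProd r L := by simp only [mul_assoc]
      _ = (L.map (r a)).prod * (L.map t).prod * (t a * pairProd r L) := by
          rw [h1]; simp only [mul_assoc]
      _ = (L.map (r a)).prod * ((L.map t).prod * pairProd r L) * t a := by
          rw [h2.eq]; simp only [mul_assoc]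
      _ = _ := by rw [h3]; simp only [mul_assoc]

namespace IsYBFamily

variable {r : ι → ι → M} (hr : IsYBFamily r)
include hr

theorem reverse_prod_mul_prod_row {a b : ι} {L : List ι} (hL : (a :: L).Nodup)
    (hb : b ∉ a :: L) :
    (L.reverse.map (r · b)).prod * r a b * (L.map (r a)).prod =
      (L.map (r a)).prod * r a b * (L.reverse.map (r · b)).prod := by
  induction L with
  | nil => simp
  | cons l L ih =>
    simp only [List.nodup_cons, List.mem_cons, not_or] at hL hb
    have ih' := ih (by simp [hL]) (by simp [hb])
    have h1 : Commute (r a l) (L.reverse.map (r · b)).prod := commute_map_prod fun i hi => by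
      have hi : i ∈ L := by simpa using hi
      exact hr.commute _ _ _ _ (by rintro rfl; exact hL.1.2 hi) (Ne.symm hb.1)
        (by rintro rfl; exact hL.2.1 hi) (Ne.symm hb.2.1)
    have h2 : Commute (r l b) (L.map (r a)).prod := commute_map_prod fun i hi =>
      hr.commute _ _ _ _ (Ne.symm hL.1.1) (by rintro rfl; exact hL.2.1 hi) hb.1
        (by rintro rfl; exact hb.2.2 hi)
    simp only [List.map_cons, List.prod_cons, List.reverse_cons, List.map_append,
      List.prod_append, List.map_nil, List.prod_nil, mul_one]
    have h3 := hr.yang_baxter a l b hL.1.1 (Ne.symm hb.1) (Ne.symm hb.2.1)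
    calc (L.reverse.map (r · b)).prod * r l b * r a b * (r a l * (L.map (r a)).prod)
        = (L.reverse.map (r · b)).prod * (r l b * r a b * r a l) * (L.map (r a)).prod := by
          simp only [mul_assoc]
      _ = ((L.reverse.map (r · b)).prod * r a l) * r a b * (r l b * (L.map (r a)).prod) := by
          rw [← h3]; simp only [mul_assoc]
      _ = r a l * ((L.reverse.map (r · b)).prod * r a b * (L.map (r a)).prod) * r l b := by
          rw [← h1.eq, h2.eq]; simp only [mul_assoc]
      _ = _ := by rw [ih']; simp only [mul_assoc]

theorem reverse_prod_mul_pairProd {b : ι} {L : List ι} (hL : L.Nodup) (hb : b ∉ L) :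
    (L.reverse.map (r · b)).prod * pairProd r L = pairProd r L * (L.map (r · b)).prod := by
  induction L with
  | nil => simp
  | cons a L ih =>
    have hL' := List.nodup_cons.mp hL
    have hb' := not_or.mp (List.mem_cons.not.mp hb)
    have h1 := hr.reverse_prod_mul_prod_row hL hb
    have h2 : Commute (r a b) (pairProd r L) := commute_pairProd hL'.2 fun i hi j hj _ =>
      hr.commute _ _ _ _ (by rintro rfl; exact hL'.1 hi) (by rintro rfl; exact hL'.1 hj)
        (by rintro rfl; exact hb'.2 hi) (by rintro rfl; exact hb'.2 hj)
    have h3 := ih hL'.2 hb'.2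
    simp only [List.map_cons, List.prod_cons, pairProd, List.reverse_cons, List.map_append,
      List.prod_append, List.map_nil, List.prod_nil, mul_one]
    calc (L.reverse.map (r · b)).prod * r a b * ((L.map (r a)).prod * pairProd r L)
        = ((L.reverse.map (r · b)).prod * r a b * (L.map (r a)).prod) * pairProd r L := by
          simp only [mul_assoc]
      _ = (L.map (r a)).prod * r a b * ((L.reverse.map (r · b)).prod * pairProd r L) := by
          rw [h1]; simp only [mul_assoc]
      _ = (L.map (r a)).prod * (r a b * pairProd r L) * (L.map (r · b)).prod := by
          rw [h3]; simp only [mul_assoc]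
      _ = _ := by rw [h2.eq]; simp only [mul_assoc]

theorem column_exchange {K : List ι} (hK : K.Nodup) {i j : ι} (hi : i ∉ K) (hj : j ∉ K)
    (hij : i ≠ j) :
    (K.map (r · i)).prod * (K.map (r · j)).prod * r i j =
      r i j * (K.map (r · j)).prod * (K.map (r · i)).prod := by
  induction K with
  | nil => simp
  | cons a K ih =>
    rw [List.nodup_cons] at hK
    rw [List.mem_cons, not_or] at hi hj
    have h1 : Commute (r a j) (K.map (r · i)).prod := commute_map_prod fun k hk =>
      hr.commute _ _ _ _ (by rintro rfl; exact hK.1 hk) (Ne.symm hi.1)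
        (by rintro rfl; exact hj.2 hk) hij.symm
    have h2 : Commute (r a i) (K.map (r · j)).prod := commute_map_prod fun k hk =>
      hr.commute _ _ _ _ (by rintro rfl; exact hK.1 hk) (Ne.symm hj.1)
        (by rintro rfl; exact hi.2 hk) hij
    have h3 := hr.yang_baxter a i j (Ne.symm hi.1) (Ne.symm hj.1) hij
    simp only [List.map_cons, List.prod_cons]
    calc r a i * (K.map (r · i)).prod * (r a j * (K.map (r · j)).prod) * r i j
        = r a i * ((K.map (r · i)).prod * r a j) * (K.map (r · j)).prod * r i j := by
          simp only [mul_assoc]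
      _ = r a i * r a j * ((K.map (r · i)).prod * (K.map (r · j)).prod * r i j) := by
          rw [← h1.eq]; simp only [mul_assoc]
      _ = (r a i * r a j * r i j) * (K.map (r · j)).prod * (K.map (r · i)).prod := by
          rw [ih hK.2 hi.2 hj.2]; simp only [mul_assoc]
      _ = r i j * r a j * (r a i * (K.map (r · j)).prod) * (K.map (r · i)).prod := by
          rw [h3]; simp only [mul_assoc]
      _ = _ := by rw [h2.eq]; simp only [mul_assoc]

/-- The fused operator preserves the image of `pairProd r K * pairProd r L`. -/
theorem fused_mul_pairProd {K L : List ι} (hK : K.Nodup) (hL : L.Nodup) (hKL : K.Disjoint L) :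
    (L.map fun i => (K.reverse.map (r · i)).prod).prod * (pairProd r K * pairProd r L) =
      pairProd r K * pairProd r L * (L.reverse.map fun i => (K.map (r · i)).prod).prod := by
  have h1 : (L.map fun i => (K.reverse.map (r · i)).prod).prod * pairProd r K =
      pairProd r K * (L.map fun i => (K.map (r · i)).prod).prod := by
    clear hL
    induction L with
    | nil => simp
    | cons a L ih =>
      rw [List.disjoint_cons_right] at hKL
      simp only [List.map_cons, List.prod_cons]
      rw [mul_assoc, ih hKL.2, ← mul_assoc, hr.reverse_prod_mul_pairProd hK hKL.1, mul_assoc]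
  have h2 := prod_mul_pairProd (r := r) (t := fun i => (K.map (r · i)).prod) hL
    (fun i hi j hj hij => hr.column_exchange hK (fun h => hKL h hi) (fun h => hKL h hj) hij)
    (fun i hi j hj k hk hij hik => (commute_map_prod fun l hl => (hr.commute _ _ _ _
      (by rintro rfl; exact hKL hl hj) (by rintro rfl; exact hKL hl hk) hij hik).symm).symm)
  rw [← mul_assoc, h1, mul_assoc, h2, mul_assoc]

theorem mul_pairProd_swap {p q : ι} {L₁ L₂ : List ι} (hL : (L₁ ++ p :: q :: L₂).Nodup) :
    r q p * pairProd r (L₁ ++ p :: q :: L₂) = pairProd r (L₁ ++ q :: p :: L₂) * r p q := by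
  induction L₁ with
  | nil =>
    simp only [List.nil_append, List.nodup_cons, List.mem_cons, not_or] at hL
    have h1 := prod_mul_prod_row (r := r) (t := r p) (a := q) (L := L₂) (by simp [hL])
      (fun i hi => hr.yang_baxter p q i hL.1.1 (by rintro rfl; exact hL.1.2 hi)
        (by rintro rfl; exact hL.2.1 hi))
      (fun i hi j hj hij => hr.commute _ _ _ _ hL.1.1 (by rintro rfl; exact hL.1.2 hj)
        (by rintro rfl; exact hL.2.1 hi) hij)
    have h2 : Commute (r p q) (pairProd r L₂) := commute_pairProd hL.2.2 fun i hi j hj _ =>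
      hr.commute _ _ _ _ (by rintro rfl; exact hL.1.2 hi) (by rintro rfl; exact hL.1.2 hj)
        (by rintro rfl; exact hL.2.1 hi) (by rintro rfl; exact hL.2.1 hj)
    simp only [List.nil_append, pairProd, List.map_cons, List.prod_cons]
    calc r q p * (r p q * (L₂.map (r p)).prod * ((L₂.map (r q)).prod * pairProd r L₂))
        = r q p * (r p q * (L₂.map (r p)).prod * (L₂.map (r q)).prod) * pairProd r L₂ := by
          simp only [mul_assoc]
      _ = r q p * (L₂.map (r q)).prod * (L₂.map (r p)).prod * (r p q * pairProd r L₂) := by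
          rw [h1]; simp only [mul_assoc]
      _ = _ := by rw [h2.eq]; simp only [mul_assoc]
  | cons a L₁ ih =>
    rw [List.cons_append, List.nodup_cons] at hL
    have ih' := ih hL.2
    have hL' := hL.2
    simp only [List.mem_append, List.mem_cons, not_or, List.nodup_append, List.nodup_cons] at hL
    have h1 : Commute (r q p) (L₁.map (r a)).prod := commute_map_prod fun i hi =>
      hr.commute _ _ _ _ (by rintro rfl; exact hL.1.2.2.1 rfl)
        (by rintro rfl; exact hL.2.2.2 _ hi _ (by simp) rfl)
        (by rintro rfl; exact hL.1.2.1 rfl)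
        (by rintro rfl; exact hL.2.2.2 _ hi _ (by simp) rfl)
    have h2 : Commute (r q p) (L₂.map (r a)).prod := commute_map_prod fun i hi =>
      hr.commute _ _ _ _ (by rintro rfl; exact hL.1.2.2.1 rfl)
        (by rintro rfl; exact hL.2.2.1.2.1 hi)
        (by rintro rfl; exact hL.1.2.1 rfl)
        (by rintro rfl; exact hL.2.2.1.1.2 hi)
    have h3 := hr.yang_baxter a q p hL.1.2.2.1 hL.1.2.1 (Ne.symm hL.2.2.1.1.1)
    simp only [List.cons_append, pairProd, List.map_append, List.map_cons, List.prod_append,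
      List.prod_cons]
    calc r q p * ((L₁.map (r a)).prod * (r a p * (r a q * (L₂.map (r a)).prod)) *
          pairProd r (L₁ ++ p :: q :: L₂))
        = (r q p * (L₁.map (r a)).prod) * (r a p * (r a q * (L₂.map (r a)).prod)) *
          pairProd r (L₁ ++ p :: q :: L₂) := by simp only [mul_assoc]
      _ = (L₁.map (r a)).prod * (r q p * r a p * r a q) * (L₂.map (r a)).prod *
          pairProd r (L₁ ++ p :: q :: L₂) := by rw [h1.eq]; simp only [mul_assoc]
      _ = (L₁.map (r a)).prod * r a q * r a p * (r q p * (L₂.map (r a)).prod) *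
          pairProd r (L₁ ++ p :: q :: L₂) := by rw [← h3]; simp only [mul_assoc]
      _ = (L₁.map (r a)).prod * r a q * r a p * (L₂.map (r a)).prod *
          (r q p * pairProd r (L₁ ++ p :: q :: L₂)) := by rw [h2.eq]; simp only [mul_assoc]
      _ = _ := by rw [ih']; simp only [mul_assoc]

theorem mul_fused_swap {p q : ι} {L₁ L₂ L : List ι} (hK : (L₁ ++ p :: q :: L₂).Nodup)
    (hKL : (L₁ ++ p :: q :: L₂).Disjoint L) :
    r q p * (L.map fun i => ((L₁ ++ p :: q :: L₂).reverse.map (r · i)).prod).prod =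
      (L.map fun i => ((L₁ ++ q :: p :: L₂).reverse.map (r · i)).prod).prod * r q p := by
  induction L with
  | nil => simp
  | cons b L ih =>
    rw [List.disjoint_cons_right] at hKL
    have ih' := ih hKL.2
    have hb := hKL.1
    simp only [List.mem_append, List.mem_cons, not_or, List.nodup_append, List.nodup_cons] at hK hb
    have h1 : Commute (r q p) (L₁.reverse.map (r · b)).prod := commute_map_prod fun i hi => by
      have hi : i ∈ L₁ := by simpa using hi
      exact hr.commute _ _ _ _ (by rintro rfl; exact hK.2.2 _ hi _ (by simp) rfl)
        (Ne.symm hb.2.2.1) (by rintro rfl; exact hK.2.2 _ hi _ (by simp) rfl) (Ne.symm hb.2.1)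
    have h2 : Commute (r q p) (L₂.reverse.map (r · b)).prod := commute_map_prod fun i hi => by
      have hi : i ∈ L₂ := by simpa using hi
      exact hr.commute _ _ _ _ (by rintro rfl; exact hK.2.1.2.1 hi)
        (Ne.symm hb.2.2.1) (by rintro rfl; exact hK.2.1.1.2 hi) (Ne.symm hb.2.1)
    have h3 := hr.yang_baxter q p b (Ne.symm hK.2.1.1.1) (Ne.symm hb.2.2.1) (Ne.symm hb.2.1)
    have h4 : r q p * ((L₁ ++ p :: q :: L₂).reverse.map (r · b)).prod =
        ((L₁ ++ q :: p :: L₂).reverse.map (r · b)).prod * r q p := by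
      simp only [List.reverse_append, List.reverse_cons, List.map_append, List.map_cons,
        List.map_nil, List.prod_append, List.prod_cons, List.prod_nil, mul_one]
      calc r q p * ((L₂.reverse.map (r · b)).prod * r q b * r p b * (L₁.reverse.map (r · b)).prod)
          = (r q p * (L₂.reverse.map (r · b)).prod) * r q b * r p b *
            (L₁.reverse.map (r · b)).prod := by simp only [mul_assoc]
        _ = (L₂.reverse.map (r · b)).prod * (r q p * r q b * r p b) *
            (L₁.reverse.map (r · b)).prod := by rw [h2.eq]; simp only [mul_assoc]
        _ = (L₂.reverse.map (r · b)).prod * r p b * r q b *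
            (r q p * (L₁.reverse.map (r · b)).prod) := by rw [h3]; simp only [mul_assoc]
        _ = _ := by rw [h1.eq]; simp only [mul_assoc]
    rw [List.map_cons, List.prod_cons, List.map_cons, List.prod_cons, ← mul_assoc, h4, mul_assoc,
      ih', mul_assoc]

end IsYBFamily

theorem pairProd_map {κ : Type*} (r : ι → ι → M) (e : κ → ι) (L : List κ) :
    pairProd r (L.map e) = pairProd (fun i j => r (e i) (e j)) L := by
  induction L with
  | nil => rfl
  | cons a L ih => simp only [List.map_cons, pairProd, ih, List.map_map]; rfl

theorem map_pairProd {M' : Type*} [Monoid M'] (φ : M →* M') (r : ι → ι → M) (L : List ι) :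
    φ (pairProd r L) = pairProd (fun i j => φ (r i j)) L := by
  induction L with
  | nil => simp [pairProd]
  | cons a L ih => simp only [pairProd, map_mul, map_list_prod, ih, List.map_map]; rfl

theorem semiconjBy_map_prod {κ : Type*} {P : M} {f g : κ → M} (h : ∀ i, SemiconjBy P (f i) (g i))
    (L : List κ) : SemiconjBy P (L.map f).prod (L.map g).prod := by
  induction L with
  | nil => exact SemiconjBy.one_right P
  | cons a L ih => simpa using (h a).mul_right ih

theorem semiconjBy_pairProd {P : M} {r r' : ι → ι → M} (h : ∀ i j, SemiconjBy P (r i j) (r' i j))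
    (L : List ι) : SemiconjBy P (pairProd r L) (pairProd r' L) := by
  induction L with
  | nil => exact SemiconjBy.one_right P
  | cons a L ih => exact (semiconjBy_map_prod (h a) L).mul_right ih

theorem semiconjBy_fused {P : M} {r r' : ι → ι → M} {σ : ι → ι}
    (h : ∀ i j, SemiconjBy P (r (σ i) (σ j)) (r' i j)) (K L : List ι) :
    SemiconjBy P ((L.map σ).map fun i => ((K.map σ).reverse.map (r · i)).prod).prod
      (L.map fun i => (K.reverse.map (r' · i)).prod).prod := by
  simp only [← List.map_reverse, List.map_map, Function.comp_def]
  exact semiconjBy_map_prod (fun i => semiconjBy_map_prod (fun j => h j i) K.reverse) L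

theorem prod_flatMap_filter_eq_pairProd [LinearOrder ι] (r : ι → ι → M) {L : List ι}
    (hL : L.Pairwise (· < ·)) :
    ((L.flatMap fun i => (L.filter fun j => decide (i < j)).map fun j => (i, j)).map
      fun p => r p.1 p.2).prod = pairProd r L := by
  induction L with
  | nil => rfl
  | cons a L ih =>
    rw [List.pairwise_cons] at hL
    have h1 : (a :: L).filter (fun j => decide (a < j)) = L := by
      simpa using hL.1
    have h2 : (L.flatMap fun i => ((a :: L).filter fun j => decide (i < j)).map fun j => (i, j)) =
        L.flatMap fun i => (L.filter fun j => decide (i < j)).map fun j => (i, j) := by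
      refine List.flatMap_congr fun i hi => ?_
      rw [List.filter_cons_of_neg (by simpa using (hL.1 i hi).le)]
    rw [List.flatMap_cons, h1, h2, List.map_append, List.prod_append, ih hL.2, pairProd,
      List.map_map]
    rfl

end YangBaxterFamilies

section TensorFactors

variable {N m n n' : ℕ}

open Matrix

theorem prod_ite_eq_ite_forall {ι : Type*} [Fintype ι] (p : ι → Prop) [DecidablePred p]
    (f g : ι → Fin N) [Decidable (∀ i, p i → f i = g i)] :
    (∏ i, if p i then (if f i = g i then (1 : ℂ) else 0) else 1) =
      if ∀ i, p i → f i = g i then 1 else 0 := by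
  split_ifs with h
  · refine Finset.prod_eq_one fun i _ => ?_
    split_ifs with h1 h2
    · rfl
    · exact absurd (h i h1) h2
    · rfl
  · push Not at h
    obtain ⟨i, h1, h2⟩ := h
    exact Finset.prod_eq_zero (Finset.mem_univ i) (by simp [h1, h2])

theorem opBlock_apply (e : Fin n → Fin m) (X : EndT N n) (f g : Fin m → Fin N) :
    opBlock N e X f g =
      X (f ∘ e) (g ∘ e) * if ∀ i, (∀ k, e k ≠ i) → f i = g i then 1 else 0 := by
  rw [opBlock, prod_ite_eq_ite_forall]

theorem op2_apply (X : End2 N) (a b : Fin m) (f g : Fin m → Fin N) :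
    op2 N m X a b f g =
      X (f a, f b) (g a, g b) * if ∀ i, i ≠ a ∧ i ≠ b → f i = g i then 1 else 0 := by
  rw [op2, prod_ite_eq_ite_forall]

theorem opBlock_mulVec (e : Fin n → Fin m) (he : Function.Injective e) (X : EndT N n)
    (v : (Fin m → Fin N) → ℂ) (f : Fin m → Fin N) :
    (opBlock N e X *ᵥ v) f = ∑ p, X (f ∘ e) p * v (Function.extend e p f) := by
  classical
  simp only [mulVec, dotProduct, opBlock_apply]
  rw [← Finset.sum_filter_of_ne (p := fun h => ∀ i, (∀ k, e k ≠ i) → f i = h i)]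
  · refine Finset.sum_nbij' (fun h => h ∘ e) (fun p => Function.extend e p f) (by simp) ?_ ?_ ?_ ?_
    · intro p _
      simp only [Finset.mem_filter, Finset.mem_univ, true_and]
      intro i hi
      rw [Function.extend_apply' _ _ _ (by simpa using hi)]
    · intro h hh
      simp only [Finset.mem_filter, Finset.mem_univ, true_and] at hh
      funext i
      by_cases hi : ∃ k, e k = i
      · obtain ⟨k, rfl⟩ := hi
        simp [he.extend_apply]
      · rw [Function.extend_apply' _ _ _ hi]
        exact hh i (by simpa using hi)
    · intro p _
      exact Function.extend_comp he p f
    · intro h hh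
      simp only [Finset.mem_filter, Finset.mem_univ, true_and] at hh
      have : Function.extend e (h ∘ e) f = h := by
        funext i
        by_cases hi : ∃ k, e k = i
        · obtain ⟨k, rfl⟩ := hi
          simp [he.extend_apply]
        · rw [Function.extend_apply' _ _ _ hi]
          exact hh i (by simpa using hi)
      rw [this, if_pos hh, mul_one]
  · intro h _ hne
    by_contra hcon
    simp [hcon] at hne

theorem opBlock_one (e : Fin n → Fin m) : opBlock N e (1 : EndT N n) = 1 := by
  ext f g
  rw [opBlock_apply, one_apply, one_apply]
  by_cases h : f = g
  · simp [h]
  · rw [if_neg h, mul_eq_zero]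
    by_contra! hcon
    apply h
    have h1 : f ∘ e = g ∘ e := by simpa using hcon.1
    have h2 : ∀ i, (∀ k, e k ≠ i) → f i = g i := by simpa using hcon.2
    funext i
    by_cases hi : ∃ k, e k = i
    · obtain ⟨k, rfl⟩ := hi
      exact congrFun h1 k
    · exact h2 i (by simpa using hi)

theorem opBlock_mul (e : Fin n → Fin m) (he : Function.Injective e) (X Y : EndT N n) :
    opBlock N e (X * Y) = opBlock N e X * opBlock N e Y := by
  ext f g
  have h := opBlock_mulVec e he X (fun h => opBlock N e Y h g) f
  have h' : (opBlock N e X * opBlock N e Y) f g =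
      (opBlock N e X *ᵥ fun h => opBlock N e Y h g) f := rfl
  rw [h', h, opBlock_apply, mul_apply, Finset.sum_mul]
  refine Finset.sum_congr rfl fun p _ => ?_
  rw [opBlock_apply, Function.extend_comp he, mul_assoc]
  have : (∀ i, (∀ k, e k ≠ i) → Function.extend e p f i = g i) ↔
      ∀ i, (∀ k, e k ≠ i) → f i = g i := by
    refine forall_congr' fun i => imp_congr_right fun hi => ?_
    rw [Function.extend_apply' _ _ _ (by simpa using hi)]
  simp only [this]

/-- `opBlock` along an injective embedding of the factors, as a monoid homomorphism. -/
def opBlockHom (N : ℕ) (e : Fin n → Fin m) (he : Function.Injective e) :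
    EndT N n →* EndT N m where
  toFun := opBlock N e
  map_one' := opBlock_one e
  map_mul' := opBlock_mul e he

theorem opBlock_op2 (e : Fin n → Fin m) (he : Function.Injective e) (X : End2 N) (a b : Fin n) :
    opBlock N e (op2 N n X a b) = op2 N m X (e a) (e b) := by
  ext f g
  rw [opBlock_apply, op2_apply, op2_apply, mul_assoc, ite_zero_mul_ite_zero, mul_one]
  congr 1
  refine if_congr ⟨fun h i hi => ?_, fun h => ⟨fun i hi => ?_, fun i hi => ?_⟩⟩ rfl rfl
  · by_cases hk : ∃ k, e k = i
    · obtain ⟨k, rfl⟩ := hk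
      exact h.1 k (by simpa [he.eq_iff] using hi)
    · exact h.2 i (by simpa using hk)
  · exact h (e i) (by simpa [he.eq_iff] using hi)
  · exact h i ⟨(hi a).symm, (hi b).symm⟩

theorem opBlock_mul_opBlock_apply (d : Fin n → Fin m) (e : Fin n' → Fin m)
    (hde : ∀ i j, d i ≠ e j) (X : EndT N n) (Y : EndT N n') (f g : Fin m → Fin N) :
    (opBlock N d X * opBlock N e Y) f g = X (f ∘ d) (g ∘ d) * Y (f ∘ e) (g ∘ e) *
      if ∀ i, (∀ k, d k ≠ i) → (∀ k, e k ≠ i) → f i = g i then 1 else 0 := by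
  classical
  let h₀ : Fin m → Fin N := fun i => if ∃ k, d k = i then g i else f i
  have hd : h₀ ∘ d = g ∘ d := by
    funext k
    simp [h₀]
  have he : h₀ ∘ e = f ∘ e := by
    funext k
    simp [h₀, hde]
  rw [mul_apply, Finset.sum_eq_single h₀]
  · rw [opBlock_apply, opBlock_apply, hd, he]
    have h1 : ∀ i, (∀ k, d k ≠ i) → f i = h₀ i := by
      intro i hi
      simp [h₀, hi]
    have h2 : (∀ i, (∀ k, e k ≠ i) → h₀ i = g i) ↔
        ∀ i, (∀ k, d k ≠ i) → (∀ k, e k ≠ i) → f i = g i := by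
      refine forall_congr' fun i => ?_
      by_cases hi : ∃ k, d k = i
      · have : ¬ ∀ k, d k ≠ i := by simpa using hi
        simp [h₀, hi]
      · have : ∀ k, d k ≠ i := by simpa using hi
        simp [h₀, this]
    rw [if_pos h1]
    simp only [h2]
    ring
  · intro h _ hne
    obtain ⟨i, hi⟩ := Function.ne_iff.mp hne
    rw [opBlock_apply, opBlock_apply]
    by_cases hk : ∃ k, d k = i
    · have : ¬ ∀ i, (∀ k, e k ≠ i) → h i = g i := fun hcon => hi <| by
        rw [hcon i]
        · simp [h₀, hk]
        · obtain ⟨k, rfl⟩ := hk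
          exact fun j => (hde k j).symm
      simp [this]
    · have : ¬ ∀ i, (∀ k, d k ≠ i) → f i = h i := fun hcon => hi <| by
        rw [← hcon i (by simpa using hk)]
        simp [h₀, hk]
      simp [this]
  · simp

theorem commute_opBlock (d : Fin n → Fin m) (e : Fin n' → Fin m)
    (hde : ∀ i j, d i ≠ e j) (X : EndT N n) (Y : EndT N n') :
    Commute (opBlock N d X) (opBlock N e Y) := by
  ext f g
  rw [opBlock_mul_opBlock_apply d e hde, opBlock_mul_opBlock_apply e d fun i j => (hde j i).symm]
  rw [mul_comm (X _ _)]
  congr 1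
  refine if_congr (forall_congr' fun i => ?_) rfl rfl
  tauto

theorem op2_eq_opBlock (X : End2 N) (a b : Fin m) :
    op2 N m X a b = opBlock N ![a, b] (.of fun f g => X (f 0, f 1) (g 0, g 1)) := by
  ext f g
  rw [op2_apply, opBlock_apply]
  simp [Fin.forall_fin_two, eq_comm]

theorem op2_mul {a b : Fin m} (hab : a ≠ b) (X Y : End2 N) :
    op2 N m (X * Y) a b = op2 N m X a b * op2 N m Y a b := by
  have hinj : Function.Injective ![a, b] := by
    intro i j
    fin_cases i <;> fin_cases j <;> simp [hab, hab.symm]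
  rw [op2_eq_opBlock, op2_eq_opBlock, op2_eq_opBlock, ← opBlock_mul _ hinj]
  congr 1
  ext f g
  rw [mul_apply, of_apply, mul_apply]
  exact ((finTwoArrowEquiv (Fin N)).sum_comp fun p => X (f 0, f 1) p * Y p (g 0, g 1)).symm

theorem op2_smul (z : ℂ) (X : End2 N) (a b : Fin m) :
    op2 N m (z • X) a b = z • op2 N m X a b := by
  ext f g
  simp [op2_apply]

theorem op2_one (a b : Fin m) : op2 N m 1 a b = 1 := by
  rw [op2_eq_opBlock, ← opBlock_one ![a, b]]
  congr 1
  ext f g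
  simp [one_apply, funext_iff, Fin.forall_fin_two]

theorem flipMat_mul_apply (X : End2 N) (p q : Fin N × Fin N) :
    (flipMat N * X) p q = X p.swap q := by
  rw [mul_apply, Finset.sum_eq_single p.swap]
  · simp [flipMat]
  · rintro ⟨i, j⟩ _ h
    have : ¬ (p.1 = j ∧ p.2 = i) := fun h' => h (by ext <;> simp [h'])
    simp [flipMat, this]
  · simp

theorem mul_flipMat_apply (X : End2 N) (p q : Fin N × Fin N) :
    (X * flipMat N) p q = X p q.swap := by
  rw [mul_apply, Finset.sum_eq_single q.swap]
  · simp [flipMat]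
  · rintro ⟨i, j⟩ _ h
    have : ¬ (i = q.2 ∧ j = q.1) := fun h' => h (by ext <;> simp [h'])
    simp [flipMat, this]
  · simp

theorem op2_flip_conj (X : End2 N) (a b : Fin m) :
    op2 N m (flipMat N * X * flipMat N) a b = op2 N m X b a := by
  ext f g
  rw [op2_apply, op2_apply, mul_flipMat_apply, flipMat_mul_apply]
  congr 1
  exact if_congr (forall_congr' fun i => by tauto) rfl rfl

theorem op2_flipMat (a b : Fin m) : op2 N m (flipMat N) a b = permMat N m (Equiv.swap a b) := by
  ext f g
  rw [op2_apply, permMat, flipMat, ite_zero_mul_ite_zero, mul_one]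
  refine if_congr ⟨fun h => ?_, fun h => ?_⟩ rfl rfl
  · funext i
    rw [Function.comp_apply]
    by_cases hia : i = a
    · simpa [hia] using h.1.1
    by_cases hib : i = b
    · simpa [hib] using h.1.2
    · rw [Equiv.swap_apply_of_ne_of_ne hia hib]
      exact h.2 i ⟨hia, hib⟩
  · subst h
    refine ⟨by simp, fun i hi => ?_⟩
    simp [Equiv.swap_apply_of_ne_of_ne hi.1 hi.2]

theorem permMat_semiconjBy_op2 (π : Equiv.Perm (Fin m)) (X : End2 N) (i j : Fin m) :
    SemiconjBy (permMat N m π) (op2 N m X (π i) (π j)) (op2 N m X i j) := by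
  ext f g
  rw [mul_apply, mul_apply, Finset.sum_eq_single (f ∘ π.symm), Finset.sum_eq_single (g ∘ π)]
  · simp only [permMat, op2_apply, Function.comp_assoc, Equiv.symm_comp_self, Function.comp_id,
      if_true, one_mul, mul_one, Function.comp_apply, Equiv.symm_apply_apply]
    congr 1
    refine if_congr ⟨fun h k hk => ?_, fun h k hk => ?_⟩ rfl rfl
    · simpa using h (π k) (by simpa using hk)
    · simpa using h (π.symm k) (by simpa [Equiv.symm_apply_eq] using hk)
  · intro h _ hne
    simp [permMat, hne]
  · simp
  · intro h _ hne
    have : f ≠ h ∘ π := by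
      rintro rfl
      exact hne (by simp [Function.comp_assoc])
    simp [permMat, this]
  · simp

theorem permMat_swap_mul_self (a b : Fin m) :
    permMat N m (Equiv.swap a b) * permMat N m (Equiv.swap a b) = 1 := by
  rw [← op2_flipMat]
  by_cases hab : a = b
  · subst hab
    have : op2 N m (flipMat N) a a = 1 := by
      rw [op2_flipMat]
      ext f g
      simp [permMat, one_apply]
    rw [this, mul_one]
  · rw [← op2_mul hab, ← op2_one a b]
    congr 1
    ext p q
    rw [flipMat_mul_apply, flipMat, one_apply]
    simp [Prod.ext_iff, and_comm]

/-- The operators `R_{i,j}(x_i - x_j)` on `V^{⊗ m}`. -/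
def rOp (N : ℕ) (R : ℂ → End2 N) (x : Fin m → ℂ) (i j : Fin m) : EndT N m :=
  op2 N m (R (x i - x j)) i j

theorem isYBFamily_rOp {R : ℂ → End2 N} (hR : YangBaxter N R) (x : Fin m → ℂ) :
    IsYBFamily (rOp N R x) where
  yang_baxter i j k hij hik hjk := by
    have he : Function.Injective ![i, j, k] := by
      intro a b
      fin_cases a <;> fin_cases b <;> simp [hij, hik, hjk, hij.symm, hik.symm, hjk.symm]
    have h := congrArg (opBlock N ![i, j, k]) (hR (x i - x j) (x j - x k))
    simp only [opBlock_mul _ he, opBlock_op2 _ he] at h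
    simpa [rOp] using h
  commute i j k l hik hil hjk hjl := by
    rw [rOp, rOp, op2_eq_opBlock, op2_eq_opBlock]
    refine commute_opBlock _ _ (fun a b => ?_) _ _
    fin_cases a <;> fin_cases b <;> simp [hik, hil, hjk, hjl]

theorem permMat_semiconjBy_rOp (R : ℂ → End2 N) (x : Fin m → ℂ) (π : Equiv.Perm (Fin m))
    (i j : Fin m) :
    SemiconjBy (permMat N m π) (rOp N R x (π i) (π j)) (rOp N R (x ∘ π) i j) :=
  permMat_semiconjBy_op2 π _ i j

theorem rOp_mul_rOp {R : ℂ → End2 N} {γ : ℂ → ℂ}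
    (hU : ∀ u : ℂ, R u * (flipMat N * R (-u) * flipMat N) = γ u • (1 : End2 N))
    (x : Fin m → ℂ) {i j : Fin m} (hij : i ≠ j) :
    rOp N R x i j * rOp N R x j i = γ (x i - x j) • (1 : EndT N m) := by
  rw [rOp, rOp, ← op2_flip_conj _ i j, ← op2_mul hij, ← neg_sub (x i), hU, op2_smul, op2_one]

theorem Fop_eq_pairProd (R : ℂ → End2 N) (c : Fin n → ℂ) :
    Fop N R c = pairProd (rOp N R c) (List.finRange n) :=
  prod_flatMap_filter_eq_pairProd (rOp N R c) (List.pairwise_lt_finRange n)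

theorem opBlock_Fop (R : ℂ → End2 N) {e : Fin n → Fin m} (he : Function.Injective e)
    {c : Fin n → ℂ} {x : Fin m → ℂ} (hx : ∀ i j, x (e i) - x (e j) = c i - c j) :
    opBlock N e (Fop N R c) = pairProd (rOp N R x) ((List.finRange n).map e) := by
  rw [Fop_eq_pairProd, pairProd_map]
  refine (map_pairProd (opBlockHom N e he) _ _).trans ?_
  congr 1
  funext i j
  rw [rOp, rOp, hx]
  exact opBlock_op2 e he _ i j

theorem opBlock_castAdd_mulVec_tensVec (X : EndT N n) (x : (Fin n → Fin N) → ℂ)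
    (y : (Fin n' → Fin N) → ℂ) :
    opBlock N (Fin.castAdd n') X *ᵥ tensVec N x y = tensVec N (X *ᵥ x) y := by
  have he := Fin.castAdd_injective n n'
  funext f
  rw [opBlock_mulVec _ he, tensVec, mulVec, dotProduct, Finset.sum_mul]
  refine Finset.sum_congr rfl fun p _ => ?_
  have h : ∀ j, Function.extend (Fin.castAdd n') p f (Fin.natAdd n j) = f (Fin.natAdd n j) := by
    intro j
    rw [Function.extend_apply']
    rintro ⟨i, hi⟩
    exact absurd (congrArg Fin.val hi) (by simp; omega)
  simp only [tensVec, he.extend_apply, h, mul_assoc]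
  rfl

theorem opBlock_natAdd_mulVec_tensVec (Y : EndT N n') (x : (Fin n → Fin N) → ℂ)
    (y : (Fin n' → Fin N) → ℂ) :
    opBlock N (Fin.natAdd n) Y *ᵥ tensVec N x y = tensVec N x (Y *ᵥ y) := by
  have he := Fin.natAdd_injective n' n
  funext f
  rw [opBlock_mulVec _ he, tensVec, mulVec, dotProduct, Finset.mul_sum]
  refine Finset.sum_congr rfl fun p _ => ?_
  have h : ∀ j, Function.extend (Fin.natAdd n) p f (Fin.castAdd n' j) = f (Fin.castAdd n' j) := by
    intro j
    rw [Function.extend_apply']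
    rintro ⟨i, hi⟩
    exact absurd (congrArg Fin.val hi) (by simp; omega)
  simp only [tensVec, he.extend_apply, h, mul_left_comm (x _)]
  rfl

/-- `tensVec` as a bilinear map. -/
def tensVecHom (N n n' : ℕ) : ((Fin n → Fin N) → ℂ) →ₗ[ℂ] ((Fin n' → Fin N) → ℂ) →ₗ[ℂ]
    ((Fin (n + n') → Fin N) → ℂ) :=
  LinearMap.mk₂ ℂ (tensVec N) (fun x x' y => by funext f; simp [tensVec, add_mul])
    (fun z x y => by funext f; simp [tensVec, mul_assoc])
    (fun x y y' => by funext f; simp [tensVec, mul_add])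
    (fun z x y => by funext f; simp [tensVec, mul_left_comm])

theorem span_tensVec_single : Submodule.span ℂ
    (Set.range fun p : (Fin n → Fin N) × (Fin n' → Fin N) =>
      tensVec N (Pi.single p.1 1) (Pi.single p.2 1)) = ⊤ := by
  rw [eq_top_iff]
  intro z _
  rw [Submodule.mem_span_range_iff_exists_fun]
  refine ⟨fun p => z (Fin.append p.1 p.2), ?_⟩
  funext f
  rw [Finset.sum_apply, Finset.sum_eq_single
    ((fun i => f (Fin.castAdd n' i)), fun j => f (Fin.natAdd n j))]
  · simp [tensVec, Fin.append_castAdd_natAdd]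
  · rintro ⟨p, q⟩ _ hne
    simp only [Pi.smul_apply, tensVec, smul_eq_mul, mul_eq_zero]
    by_contra! hcon
    apply hne
    have h1 := hcon.2.1
    have h2 := hcon.2.2
    simp only [Pi.single_apply, ne_eq, ite_eq_right_iff, one_ne_zero, imp_false, not_not] at h1 h2
    rw [h1, h2]
  · simp

theorem range_opBlock_mul_opBlock_le_span {l l' : ℕ} {X : EndT N n} {Y : EndT N n'}
    {v : Fin l → (Fin n → Fin N) → ℂ} {w : Fin l' → (Fin n' → Fin N) → ℂ}
    (hv : Submodule.span ℂ (Set.range v) = LinearMap.range X.mulVecLin)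
    (hw : Submodule.span ℂ (Set.range w) = LinearMap.range Y.mulVecLin) :
    LinearMap.range (opBlock N (Fin.castAdd n') X * opBlock N (Fin.natAdd n) Y).mulVecLin ≤
      Submodule.span ℂ (Set.range fun p : Fin l × Fin l' => tensVec N (v p.1) (w p.2)) := by
  rw [LinearMap.range_eq_map, ← span_tensVec_single, Submodule.map_span_le]
  rintro _ ⟨p, rfl⟩
  rw [mulVecLin_apply, ← mulVec_mulVec, opBlock_natAdd_mulVec_tensVec,
    opBlock_castAdd_mulVec_tensVec]
  have h := Submodule.apply_mem_map₂ (tensVecHom N n n')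
    (hv ▸ LinearMap.mem_range_self X.mulVecLin (Pi.single p.1 1))
    (hw ▸ LinearMap.mem_range_self Y.mulVecLin (Pi.single p.2 1))
  rw [Submodule.map₂_span_span, Set.image2_range] at h
  exact h

end TensorFactors

section FusedOperators

variable {N m n n' : ℕ}

open Matrix

theorem exists_finRange_eq_append (k : ℕ) (hk : k + 1 < n) :
    ∃ L₁ L₂ : List (Fin n), List.finRange n = L₁ ++ ⟨k, by omega⟩ :: ⟨k + 1, hk⟩ :: L₂ := by
  refine ⟨(List.finRange n).take k, (List.finRange n).drop (k + 2), ?_⟩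
  conv_lhs => rw [← List.take_append_drop k (List.finRange n)]
  rw [List.drop_eq_getElem_cons (by simp; omega), List.drop_eq_getElem_cons (by simp; omega)]
  simp

theorem map_swap_append {ι : Type*} [DecidableEq ι] {L₁ L₂ : List ι} {p q : ι}
    (h : (L₁ ++ p :: q :: L₂).Nodup) :
    (L₁ ++ p :: q :: L₂).map (Equiv.swap p q) = L₁ ++ q :: p :: L₂ := by
  simp only [List.nodup_append, List.nodup_cons, List.mem_cons, not_or] at h
  have hfix : ∀ L : List ι, p ∉ L → q ∉ L → L.map (Equiv.swap p q) = L := fun L hp hq => by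
    refine (List.map_congr_left fun i hi => ?_).trans (List.map_id L)
    exact Equiv.swap_apply_of_ne_of_ne (by rintro rfl; exact hp hi) (by rintro rfl; exact hq hi)
  rw [List.map_append, List.map_cons, List.map_cons, Equiv.swap_apply_left,
    Equiv.swap_apply_right, hfix L₁ (fun hp => h.2.2 _ hp _ (by simp) rfl)
    (fun hp => h.2.2 _ hp _ (by simp) rfl), hfix L₂ h.2.1.1.2 h.2.1.2.1]

theorem fusedOp_eq (R : ℂ → End2 N) {a : Fin n → Fin m} {b : Fin n' → Fin m} {c : Fin n → ℂ}
    {c' : Fin n' → ℂ} {u : ℂ} {x : Fin m → ℂ} (hxa : ∀ i, x (a i) = u + c i)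
    (hxb : ∀ j, x (b j) = c' j) :
    fusedOp N R a b c c' u = (((List.finRange n').map b).map fun i =>
      (((List.finRange n).map a).reverse.map (rOp N R x · i)).prod).prod := by
  simp only [fusedOp, rOp, ← List.map_reverse, List.map_map, Function.comp_def, hxa, hxb]

theorem isUnit_of_mul_eq_smul_one {ι : Type*} [Fintype ι] [DecidableEq ι] {X Y : Matrix ι ι ℂ}
    {z : ℂ} (hz : z ≠ 0) (h : X * Y = z • 1) : IsUnit X ∧ IsUnit Y := by
  have h1 : X * (z⁻¹ • Y) = 1 := by rw [Matrix.mul_smul, h, smul_smul, inv_mul_cancel₀ hz, one_smul]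
  have h2 : (z⁻¹ • X) * Y = 1 := by rw [Matrix.smul_mul, h, smul_smul, inv_mul_cancel₀ hz, one_smul]
  exact ⟨.of_mul_eq_one _ h1, .of_mul_eq_one_right _ h2⟩

end FusedOperators

/-- Under the unitarity condition, for an admissible transposition `s_k`,
the operator `A_k ⊗ Id` maps `W_c ⊗ W_{c'}` bijectively onto `W_{c^{(s_k)}} ⊗ W_{c'}`, it
intertwines the restricted fused operators, and the two restricted fused operators have
identical matrices in the bases `{F(c)e_i ⊗ b'_j}` and `{A_k F(c)e_i ⊗ b'_j}` respectively. -/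
theorem fused_swap_equivalence
    (N : ℕ) (R : ℂ → End2 N) (hR : YangBaxter N R)
    (γ : ℂ → ℂ)
    (hU : ∀ u : ℂ, R u * (flipMat N * R (-u) * flipMat N) = γ u • (1 : End2 N))
    (n n' : ℕ) (hn : 2 ≤ n) (hn' : 2 ≤ n')
    (c : Fin n → ℂ) (c' : Fin n' → ℂ)
    (k : ℕ) (hk : k + 1 < n)
    (hγ : γ (c ⟨k, by omega⟩ - c ⟨k + 1, hk⟩) ≠ 0)
    (csk : Fin n → ℂ) (hcsk : csk = c ∘ Equiv.swap ⟨k, by omega⟩ ⟨k + 1, hk⟩)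
    (Ak : EndT N n)
    (hAk : Ak = op2 N n (flipMat N) ⟨k, by omega⟩ ⟨k + 1, hk⟩ *
      op2 N n (R (c ⟨k + 1, hk⟩ - c ⟨k, by omega⟩)) ⟨k + 1, hk⟩ ⟨k, by omega⟩)
    (Bk : EndT N (n + n')) (hBk : Bk = opBlock N (Fin.castAdd n') Ak)
    (W W' : Submodule ℂ ((Fin (n + n') → Fin N) → ℂ))
    (hW : W = LinearMap.range (Matrix.mulVecLin
      (opBlock N (Fin.castAdd n') (Fop N R c) * opBlock N (Fin.natAdd n) (Fop N R c'))))
    (hW' : W' = LinearMap.range (Matrix.mulVecLin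
      (opBlock N (Fin.castAdd n') (Fop N R csk) * opBlock N (Fin.natAdd n) (Fop N R c')))) :
    Set.BijOn (fun x => Bk.mulVec x) (W : Set ((Fin (n + n') → Fin N) → ℂ))
      (W' : Set ((Fin (n + n') → Fin N) → ℂ)) ∧
    (∀ u : ℂ, ∀ x ∈ W,
      Bk.mulVec ((fusedOp N R (Fin.castAdd n') (Fin.natAdd n) c c' u).mulVec x) =
      (fusedOp N R (Fin.castAdd n') (Fin.natAdd n) csk c' u).mulVec (Bk.mulVec x)) ∧
    (∀ u : ℂ, ∀ (l l' : ℕ) (e : Fin l → ((Fin n → Fin N) → ℂ))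
        (b : Fin l' → ((Fin n' → Fin N) → ℂ)),
      (LinearIndependent ℂ fun i => (Fop N R c).mulVec (e i)) →
      Submodule.span ℂ (Set.range fun i => (Fop N R c).mulVec (e i)) =
        LinearMap.range (Matrix.mulVecLin (Fop N R c)) →
      LinearIndependent ℂ b →
      Submodule.span ℂ (Set.range b) = LinearMap.range (Matrix.mulVecLin (Fop N R c')) →
      ∃ M : (Fin l × Fin l') → (Fin l × Fin l') → ℂ,
        (∀ p : Fin l × Fin l',
          (fusedOp N R (Fin.castAdd n') (Fin.natAdd n) c c' u).mulVec
            (tensVec N ((Fop N R c).mulVec (e p.1)) (b p.2)) =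
          ∑ s : Fin l × Fin l', M p s • tensVec N ((Fop N R c).mulVec (e s.1)) (b s.2)) ∧
        (∀ p : Fin l × Fin l',
          (fusedOp N R (Fin.castAdd n') (Fin.natAdd n) csk c' u).mulVec
            (tensVec N (Ak.mulVec ((Fop N R c).mulVec (e p.1))) (b p.2)) =
          ∑ s : Fin l × Fin l',
            M p s • tensVec N (Ak.mulVec ((Fop N R c).mulVec (e s.1))) (b s.2))) := by
  set p : Fin n := ⟨k, by omega⟩ with hp
  set q : Fin n := ⟨k + 1, hk⟩ with hq
  have hpq : p ≠ q := by simp [hp, hq]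
  have ha := Fin.castAdd_injective n n'
  have hb := Fin.natAdd_injective n' n
  have hab : ∀ i j, Fin.castAdd n' i ≠ Fin.natAdd n j := fun i j h =>
    absurd (congrArg Fin.val h) (by simp; omega)
  set a : Fin n → Fin (n + n') := Fin.castAdd n' with ha_def
  set b : Fin n' → Fin (n + n') := Fin.natAdd n with hb_def
  have hapq : a p ≠ a q := ha.ne hpq
  obtain ⟨L₁, L₂, hL⟩ := exists_finRange_eq_append k hk
  set K := (List.finRange n).map a with hK
  set L := (List.finRange n').map b with hLdef
  have hKnd : K.Nodup := (List.nodup_finRange n).map ha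
  have hLnd : L.Nodup := (List.nodup_finRange n').map hb
  have hKL : K.Disjoint L := by
    intro i hi hj
    obtain ⟨i, -, rfl⟩ := List.mem_map.mp hi
    obtain ⟨j, -, hj⟩ := List.mem_map.mp hj
    exact hab i j hj.symm
  have hK' : K = L₁.map a ++ a p :: a q :: L₂.map a := by rw [hK, hL]; simp [hp, hq]
  set σ := Equiv.swap (a p) (a q) with hσ
  set P := permMat N (n + n') σ with hP
  have hσK : K.map σ = L₁.map a ++ a q :: a p :: L₂.map a := by
    rw [hK', hσ, map_swap_append (hK' ▸ hKnd)]
  have hσL : L.map σ = L := by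
    refine (List.map_congr_left fun i hi => ?_).trans (List.map_id L)
    obtain ⟨j, -, rfl⟩ := List.mem_map.mp hi
    exact Equiv.swap_apply_of_ne_of_ne (hab p j).symm (hab q j).symm
  let x : ℂ → Fin (n + n') → ℂ := fun u => Fin.append (fun i => u + c i) c'
  have hxa : ∀ u i, x u (a i) = u + c i := fun u i => Fin.append_left _ _ i
  have hxb : ∀ u j, x u (b j) = c' j := fun u j => Fin.append_right _ _ j
  have hσa : ∀ i, σ (a i) = a (Equiv.swap p q i) := fun i => (ha.map_swap p q i).symm
  have hxsa : ∀ u i, (x u ∘ σ) (a i) = u + csk i := fun u i => by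
    rw [Function.comp_apply, hσa, hxa, hcsk, Function.comp_apply]
  have hxsb : ∀ u j, (x u ∘ σ) (b j) = c' j := fun u j => by
    rw [Function.comp_apply, hσ, Equiv.swap_apply_of_ne_of_ne (hab p j).symm (hab q j).symm, hxb]
  have hY : ∀ u, IsYBFamily (rOp N R (x u)) := fun u => isYBFamily_rOp hR _
  have hF : ∀ u, opBlock N a (Fop N R c) = pairProd (rOp N R (x u)) K := fun u =>
    opBlock_Fop R ha fun i j => by rw [hxa, hxa]; ring
  have hFs : ∀ u, opBlock N a (Fop N R csk) = pairProd (rOp N R (x u ∘ σ)) K := fun u =>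
    opBlock_Fop R ha fun i j => by rw [hxsa, hxsa]; ring
  have hF' : ∀ u, opBlock N b (Fop N R c') = pairProd (rOp N R (x u)) L := fun u =>
    opBlock_Fop R hb fun i j => by rw [hxb, hxb]
  have hB : ∀ u, Bk = P * rOp N R (x u) (a q) (a p) := fun u => by
    rw [hBk, hAk, opBlock_mul a ha, opBlock_op2 a ha, opBlock_op2 a ha, op2_flipMat, rOp, hxa, hxa,
      add_sub_add_left_eq_sub]
  have hBF : Bk * opBlock N a (Fop N R c) =
      opBlock N a (Fop N R csk) * (P * rOp N R (x 0) (a p) (a q)) := by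
    rw [hB 0, hF 0, hFs 0, mul_assoc, hK', (hY 0).mul_pairProd_swap (hK' ▸ hKnd), ← hK', ← hσK,
      pairProd_map, ← mul_assoc, ← mul_assoc]
    congr 1
    exact (semiconjBy_pairProd (fun i j => permMat_semiconjBy_rOp R (x 0) σ i j) K).eq
  have hfused : ∀ u, Bk * fusedOp N R a b c c' u = fusedOp N R a b csk c' u * Bk := fun u => by
    rw [fusedOp_eq R (hxa u) (hxb u), fusedOp_eq R (hxsa u) (hxsb u), hB u, mul_assoc]
    have h := (hY u).mul_fused_swap (hK' ▸ hKnd) (hK' ▸ hKL)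
    rw [← hK', ← hσK] at h
    rw [h, ← mul_assoc, ← mul_assoc]
    congr 1
    have h2 := (semiconjBy_fused (fun i j => permMat_semiconjBy_rOp R (x u) σ i j) K L).eq
    rwa [hσL] at h2
  have hγ' : γ (x 0 (a p) - x 0 (a q)) ≠ 0 := by
    rwa [hxa, hxa, add_sub_add_left_eq_sub]
  obtain ⟨hu1, hu2⟩ := isUnit_of_mul_eq_smul_one hγ' (rOp_mul_rOp hU (x 0) hapq)
  have hPu : IsUnit P := .of_mul_eq_one _ (permMat_swap_mul_self _ _)
  have hBu : IsUnit Bk := hB 0 ▸ hPu.mul hu2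
  set Z := P * rOp N R (x 0) (a p) (a q) with hZ
  have hZu : IsUnit Z := hPu.mul hu1
  have hZF : Commute Z (opBlock N b (Fop N R c')) := by
    rw [hZ, hP, hσ, ← op2_flipMat, rOp, ← opBlock_op2 a ha, ← opBlock_op2 a ha]
    exact (commute_opBlock a b hab _ _).mul_left (commute_opBlock a b hab _ _)
  have hBW : Bk * (opBlock N a (Fop N R c) * opBlock N b (Fop N R c')) =
      opBlock N a (Fop N R csk) * opBlock N b (Fop N R c') * Z := by
    rw [← mul_assoc, hBF, mul_assoc, hZF.eq, mul_assoc]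
  have hpres : ∀ u, ∀ y ∈ W, (fusedOp N R a b c c' u).mulVec y ∈ W := by
    rintro u y hy
    rw [hW] at hy ⊢
    obtain ⟨z, rfl⟩ := hy
    rw [Matrix.mulVecLin_apply, Matrix.mulVec_mulVec, fusedOp_eq R (hxa u) (hxb u), hF u, hF' u,
      (hY u).fused_mul_pairProd hKnd hLnd hKL, ← Matrix.mulVec_mulVec]
    exact ⟨_, rfl⟩
  have hint : ∀ u y, Bk.mulVec ((fusedOp N R a b c c' u).mulVec y) =
      (fusedOp N R a b csk c' u).mulVec (Bk.mulVec y) := fun u y => by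
    rw [Matrix.mulVec_mulVec, hfused, Matrix.mulVec_mulVec]
  refine ⟨⟨?_, (Matrix.mulVec_injective_of_isUnit hBu).injOn, ?_⟩, fun u y _ => hint u y, ?_⟩
  · intro y hy
    rw [hW] at hy
    obtain ⟨z, rfl⟩ := hy
    rw [hW']
    refine ⟨Z.mulVec z, ?_⟩
    simp only [Matrix.mulVecLin_apply, Matrix.mulVec_mulVec, hBW]
  · intro y hy
    rw [hW'] at hy
    obtain ⟨z, rfl⟩ := hy
    obtain ⟨z, rfl⟩ := Matrix.mulVec_surjective_iff_isUnit.mpr hZu z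
    refine ⟨_, hW.symm ▸ LinearMap.mem_range_self _ z, ?_⟩
    simp only [Matrix.mulVecLin_apply, Matrix.mulVec_mulVec, hBW]
  · intro u l l' e v _ he _ hv
    have hmem : ∀ s : Fin l × Fin l', tensVec N ((Fop N R c).mulVec (e s.1)) (v s.2) ∈ W := by
      intro s
      obtain ⟨z, hz⟩ : v s.2 ∈ LinearMap.range (Fop N R c').mulVecLin :=
        hv ▸ Submodule.subset_span ⟨s.2, rfl⟩
      rw [hW]
      refine ⟨tensVec N (e s.1) z, ?_⟩
      rw [Matrix.mulVecLin_apply, ← Matrix.mulVec_mulVec, opBlock_natAdd_mulVec_tensVec,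
        opBlock_castAdd_mulVec_tensVec, ← hz, Matrix.mulVecLin_apply]
    have hspan : ∀ s : Fin l × Fin l', ∃ M : Fin l × Fin l' → ℂ,
        ∑ t, M t • tensVec N ((Fop N R c).mulVec (e t.1)) (v t.2) =
          (fusedOp N R a b c c' u).mulVec
            (tensVec N ((Fop N R c).mulVec (e s.1)) (v s.2)) := fun s => by
      rw [← Submodule.mem_span_range_iff_exists_fun]
      exact range_opBlock_mul_opBlock_le_span he hv (hW ▸ hpres u _ (hmem s))
    choose M hM using hspan
    have hBt : ∀ y z, tensVec N (Ak.mulVec y) z = Bk.mulVec (tensVec N y z) := fun y z => by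
      rw [hBk, opBlock_castAdd_mulVec_tensVec]
    refine ⟨M, fun s => (hM s).symm, fun s => ?_⟩
    simp only [hBt]
    rw [← hint, ← hM]
    simp only [← Matrix.mulVecLin_apply, map_sum, map_smul]
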